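/- Let (G, G⁺, Δ) be a Garside structure, x ∈ G, and let y, z ∈ R(x) be distinct. Then there exist simple elements u₁, …, u_m ∈ Div(Δ) such that (u₁⋯u_k)⁻¹ y (u₁⋯u_k) ∈ R(x) for every k = 1, …, m, and (u₁⋯u_m)⁻¹ y (u₁⋯u_m) = z. -/

import Mathlib

open scoped Pointwise Classical

/-- A Garside structure on a group `G`: a submonoid `pos` of positive elements with
trivial units, prefix and suffix lattice operations, and a Garside element `delta`. -/
structure GarsideStructure (G : Type*) [Group G] where
  /-- the submonoid of positive elements -/
  pos : Submonoid G
  /-- the Garside element Δ -/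
  delta : G
  /-- meet for the prefix order -/
  meet : G → G → G
  /-- join for the prefix order -/
  join : G → G → G
  /-- meet for the suffix order -/
  rmeet : G → G → G
  /-- join for the suffix order -/
  rjoin : G → G → G
  units_triv : ∀ a : G, a ∈ pos → a⁻¹ ∈ pos → a = 1
  meet_le_left : ∀ a b : G, (meet a b)⁻¹ * a ∈ pos
  meet_le_right : ∀ a b : G, (meet a b)⁻¹ * b ∈ pos
  le_meet : ∀ a b c : G, c⁻¹ * a ∈ pos → c⁻¹ * b ∈ pos → c⁻¹ * meet a b ∈ pos
  le_join_left : ∀ a b : G, a⁻¹ * join a b ∈ pos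
  le_join_right : ∀ a b : G, b⁻¹ * join a b ∈ pos
  join_le : ∀ a b c : G, a⁻¹ * c ∈ pos → b⁻¹ * c ∈ pos → (join a b)⁻¹ * c ∈ pos
  rmeet_le_left : ∀ a b : G, a * (rmeet a b)⁻¹ ∈ pos
  rmeet_le_right : ∀ a b : G, b * (rmeet a b)⁻¹ ∈ pos
  le_rmeet : ∀ a b c : G, a * c⁻¹ ∈ pos → b * c⁻¹ ∈ pos → rmeet a b * c⁻¹ ∈ pos
  rjoin_le_left : ∀ a b : G, rjoin a b * a⁻¹ ∈ pos
  rjoin_le_right : ∀ a b : G, rjoin a b * b⁻¹ ∈ pos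
  rjoin_le : ∀ a b c : G, c * a⁻¹ ∈ pos → c * b⁻¹ ∈ pos → c * (rjoin a b)⁻¹ ∈ pos
  delta_pos : delta ∈ pos
  /-- Δ is balanced: its positive prefixes coincide with its positive suffixes -/
  delta_balanced : ∀ s : G, s ∈ pos → (s⁻¹ * delta ∈ pos ↔ delta * s⁻¹ ∈ pos)
  /-- the set of simple elements (divisors of Δ) is finite -/
  divDelta_finite : {s : G | s ∈ pos ∧ s⁻¹ * delta ∈ pos}.Finite
  /-- the simple elements generate `G` -/
  divDelta_generates : Subgroup.closure {s : G | s ∈ pos ∧ s⁻¹ * delta ∈ pos} = ⊤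
  /-- the atoms generate the positive monoid -/
  atoms_generate :
    Submonoid.closure {a : G | a ∈ pos ∧ a ≠ 1 ∧
      ∀ b ∈ pos, b⁻¹ * a ∈ pos → b = 1 ∨ b = a} = pos
  /-- every atom divides Δ -/
  atoms_divide_delta : ∀ a : G, a ∈ pos → a ≠ 1 →
    (∀ b ∈ pos, b⁻¹ * a ∈ pos → b = 1 ∨ b = a) → a⁻¹ * delta ∈ pos
  /-- every element is bounded below and above by powers of Δ -/
  delta_bounds : ∀ x : G, ∃ p q : ℤ, p ≤ q ∧ (delta ^ p)⁻¹ * x ∈ pos ∧ x⁻¹ * delta ^ q ∈ pos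
  /-- conjugation by Δ maps the positive monoid bijectively onto itself -/
  conj_delta : ∀ a : G, a ∈ pos ↔ delta * a * delta⁻¹ ∈ pos
  /-- some positive power of Δ is central -/
  central_power : ∃ n : ℕ, 0 < n ∧ delta ^ n ∈ Subgroup.center G
  /-- no infinite strictly decreasing (for the prefix order) sequence of positive elements -/
  no_infinite_descent : ¬ ∃ f : ℕ → G, (∀ n, f n ∈ pos) ∧
    ∀ n, (f (n + 1))⁻¹ * f n ∈ pos ∧ f (n + 1) ≠ f n

namespace GarsideStructure

variable {G : Type*} [Group G] (S : GarsideStructure G)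

/-- the prefix order: `a ≼ b` iff `a⁻¹ * b` is positive -/
def le (a b : G) : Prop := a⁻¹ * b ∈ S.pos

/-- the set of positive prefixes of an element -/
def Div (d : G) : Set G := {s : G | s ∈ S.pos ∧ S.le s d}

/-- atoms: nontrivial positive elements with no nontrivial proper positive prefix -/
def IsAtomic (a : G) : Prop :=
  a ∈ S.pos ∧ a ≠ 1 ∧ ∀ b ∈ S.pos, S.le b a → b = 1 ∨ b = a

/-- the set of atoms -/
def atoms : Set G := {a : G | S.IsAtomic a}

/-- the left denominator of `x`: `D_L x = (1 ∧ x)⁻¹` -/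
def DL (x : G) : G := (S.meet 1 x)⁻¹

/-- the left numerator of `x`: `N_L x = D_L x * x` -/
def NL (x : G) : G := S.DL x * x

/-- the (left) swap `φ(x) = N_L x * (D_L x)⁻¹ = D_L x * x * (D_L x)⁻¹` -/
def swap (x : G) : G := S.DL x * x * (S.DL x)⁻¹

/-- an element is recurrent if it is fixed by some positive iterate of the swap map -/
def Recurrent (x : G) : Prop := ∃ m : ℕ, 0 < m ∧ S.swap^[m] x = x

/-- the set `R(x)` of recurrent conjugates of `x` -/
def Rset (x : G) : Set G := {y : G | IsConj x y ∧ S.Recurrent y}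

/-- the set `C⁺(x)` of positive conjugates of `x` -/
def Cpos (x : G) : Set G := {y : G | IsConj x y ∧ y ∈ S.pos}

/-- the set `C⁻(x)` of negative conjugates of `x` -/
def Cneg (x : G) : Set G := {y : G | IsConj x y ∧ y⁻¹ ∈ S.pos}

/-- the transport of `u` at `y`: with `y = a⁻¹ b` reduced, `u^{(1)} = (a u) ∧ (b u)` -/
def transport (y u : G) : G := S.meet (S.DL y * u) (S.NL y * u)

/-- `Δ_X`: the least upper bound for the prefix order of a set `X` (`1` if there is none) -/
noncomputable def deltaOf (X : Set G) : G :=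
  if h : ∃ d : G, (∀ x ∈ X, S.le x d) ∧ ∀ c : G, (∀ x ∈ X, S.le x c) → S.le d c
  then h.choose else 1

/-- the closure `X̄ = Div(Δ_X) ∩ 𝒜` of a set of atoms -/
noncomputable def closureOf (X : Set G) : Set G := S.Div (S.deltaOf X) ∩ S.atoms

/-- the subgroup `G_X` generated by the closure of `X` -/
noncomputable def GX (X : Set G) : Subgroup G := Subgroup.closure (S.closureOf X)

/-- the support of an element: the closure of the set of atoms appearing in atom
factorizations of its left denominator and left numerator -/
noncomputable def supp (x : G) : Set G :=
  if h : ∃ p : List G × List G,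
      (∀ a ∈ p.1, a ∈ S.atoms) ∧ (∀ a ∈ p.2, a ∈ S.atoms) ∧
      p.1.prod = S.DL x ∧ p.2.prod = S.NL x
  then S.closureOf ({a : G | a ∈ h.choose.1} ∪ {a : G | a ∈ h.choose.2})
  else ∅

/-- an LCM-Garside structure -/
structure IsLCM : Prop where
  delta_eq : S.delta = S.deltaOf S.atoms
  balanced : ∀ X ⊆ S.atoms, ∀ s ∈ S.pos,
    (S.le s (S.deltaOf X) ↔ S.deltaOf X * s⁻¹ ∈ S.pos)
  div_eq : ∀ X ⊆ S.atoms,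
    S.Div (S.deltaOf X) = S.Div S.delta ∩ {g : G | g ∈ S.GX X ∧ g ∈ S.pos}
  factor_closed : ∀ X ⊆ S.atoms, ∀ g : G, g ∈ S.GX X → g ∈ S.pos →
    ∀ a b : G, a ∈ S.pos → b ∈ S.pos → g = a * b → a ∈ S.GX X ∧ b ∈ S.GX X
  lattice_closed : ∀ X ⊆ S.atoms, ∀ a b : G, a ∈ S.GX X → b ∈ S.GX X →
    S.meet a b ∈ S.GX X ∧ S.join a b ∈ S.GX X
  fraction_closed : ∀ X ⊆ S.atoms, ∀ g : G, g ∈ S.GX X →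
    S.DL g ∈ S.GX X ∧ S.NL g ∈ S.GX X

/-- a standard parabolic subgroup: the subgroup generated by a saturated set of atoms -/
noncomputable def IsStandardParabolic (H : Subgroup G) : Prop :=
  ∃ X : Set G, X ⊆ S.atoms ∧ S.closureOf X = X ∧ H = S.GX X

/-- a parabolic subgroup: a conjugate of a standard parabolic subgroup -/
noncomputable def IsParabolic (H : Subgroup G) : Prop :=
  ∃ (P : Subgroup G) (c : G), S.IsStandardParabolic P ∧
    H = Subgroup.map (MulAut.conj c).toMonoidHom P

/-- the structure is support-preserving if conjugations between positive elements
conjugate the corresponding parabolic subgroups of the supports -/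
noncomputable def SupportPreserving : Prop :=
  ∀ y ∈ S.pos, ∀ z ∈ S.pos, ∀ α : G, α⁻¹ * y * α = z →
    Subgroup.map (MulAut.conj α⁻¹).toMonoidHom (S.GX (S.supp y)) = S.GX (S.supp z)

/-- `P` is the parabolic closure of `x` -/
noncomputable def IsParabolicClosure (x : G) (P : Subgroup G) : Prop :=
  S.IsParabolic P ∧ x ∈ P ∧ ∀ H : Subgroup G, S.IsParabolic H → x ∈ H → P ≤ H

end GarsideStructure

/-!
Conjugations form a groupoid: the pair `(y, u)` is an arrow `y ⟶ u⁻¹ y u`. The swap acts on it by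
`(y, u) ↦ (φ(y), u⁽¹⁾)`, where `u⁽¹⁾` is the transport of `u` at `y`. Transport is compatible with
`∧`, and it fixes the powers of `Δ`, so it preserves every interval `[Δ^p, Δ^q]`; these intervals
are finite. As the swap is injective on recurrent elements, an arrow between recurrent elements
lives in a finite set on which the swap of arrows is injective, and is therefore periodic.
Conversely the target of a periodic arrow is recurrent. Hence if `u⁻¹ y u` and `v⁻¹ y v` are
recurrent, so is the conjugate of `y` by `u ∧ v`. A conjugator between two recurrent elements can be
made positive by a central power of `Δ`; the case `v = Δ` then says that conjugating by the first
factor `u ∧ Δ` of its greedy normal form stays among the recurrent elements, and one continues with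
the remaining factors.
-/

open Function Set

section PeriodicPoints

variable {α : Type*} {f : α → α}

theorem subset_periodicPts_of_injOn {s : Set α} (hs : s.Finite) (hmaps : MapsTo f s s)
    (hinj : InjOn f s) : s ⊆ periodicPts f := by
  intro x hx
  have : Finite s := hs
  have hval : Semiconj Subtype.val (hmaps.restrict f s s) f := fun _ => rfl
  exact hval.mapsTo_periodicPts ((hmaps.restrict_inj.2 hinj).mem_periodicPts ⟨x, hx⟩)

theorem finite_range_iterate_of_mem_periodicPts {x : α} (hx : x ∈ periodicPts f) :
    (range fun n => f^[n] x).Finite := by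
  obtain ⟨m, hm, hxm⟩ := hx
  refine ((finite_Iio m).image fun n => f^[n] x).subset ?_
  rintro _ ⟨n, rfl⟩
  exact ⟨n % m, Nat.mod_lt n hm, hxm.iterate_mod_apply n⟩

end PeriodicPoints

namespace GarsideStructure

variable {G : Type*} [Group G] {S : GarsideStructure G}

section PrefixOrder

variable (S) in
theorem le_refl (a : G) : S.le a a := by
  simp only [le, inv_mul_cancel, S.pos.one_mem]

theorem le.trans {a b c : G} (hab : S.le a b) (hbc : S.le b c) : S.le a c := by
  simpa only [le, mul_assoc, mul_inv_cancel_left] using S.pos.mul_mem hab hbc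

theorem le.antisymm {a b : G} (hab : S.le a b) (hba : S.le b a) : a = b :=
  inv_mul_eq_one.1 (S.units_triv _ hab (by simpa only [le, mul_inv_rev, inv_inv] using hba))

variable (S) in
theorem eq_of_forall_le_iff {a b : G} (h : ∀ c, S.le c a ↔ S.le c b) : a = b :=
  ((h a).1 (S.le_refl a)).antisymm ((h b).2 (S.le_refl b))

theorem one_le_iff {a : G} : S.le 1 a ↔ a ∈ S.pos := by
  simp only [le, inv_one, one_mul]

theorem mul_le_mul_left_iff (g : G) {a b : G} : S.le (g * a) (g * b) ↔ S.le a b := by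
  simp only [le, mul_inv_rev, mul_assoc, inv_mul_cancel_left]

theorem mul_delta_le_mul_delta_iff {a b : G} :
    S.le (a * S.delta) (b * S.delta) ↔ S.le a b := by
  rw [le, S.conj_delta]
  simp only [le, mul_inv_rev, mul_assoc, mul_inv_cancel_left, mul_inv_cancel, mul_one]

theorem mul_delta_zpow_le_mul_delta_zpow_iff (q : ℤ) {a b : G} :
    S.le (a * S.delta ^ q) (b * S.delta ^ q) ↔ S.le a b := by
  induction q using Int.induction_on with
  | zero => simp only [zpow_zero, mul_one]
  | succ q ih =>
    rw [zpow_add_one, ← mul_assoc, ← mul_assoc, mul_delta_le_mul_delta_iff, ih]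
  | pred q ih =>
    rw [← mul_delta_le_mul_delta_iff, mul_assoc, mul_assoc, ← zpow_add_one, sub_add_cancel, ih]

theorem delta_zpow_le_delta_zpow {p q : ℤ} (hpq : p ≤ q) :
    S.le (S.delta ^ p) (S.delta ^ q) := by
  obtain ⟨k, rfl⟩ := Int.le.dest hpq
  rw [le, zpow_add, inv_mul_cancel_left, zpow_natCast]
  exact S.pos.pow_mem S.delta_pos k

theorem le_meet_iff {a b c : G} : S.le c (S.meet a b) ↔ S.le c a ∧ S.le c b :=
  ⟨fun h => ⟨h.trans (S.meet_le_left a b), h.trans (S.meet_le_right a b)⟩,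
    fun h => S.le_meet a b c h.1 h.2⟩

theorem meet_mono {a b c d : G} (hac : S.le a c) (hbd : S.le b d) :
    S.le (S.meet a b) (S.meet c d) :=
  le_meet_iff.2 ⟨le.trans (S.meet_le_left a b) hac, le.trans (S.meet_le_right a b) hbd⟩

theorem map_meet (e : S.le ≃r S.le) (a b : G) : e (S.meet a b) = S.meet (e a) (e b) := by
  refine S.eq_of_forall_le_iff fun c => ?_
  obtain ⟨c, rfl⟩ := e.surjective c
  simp only [le_meet_iff, e.map_rel_iff]

theorem mul_meet (g a b : G) : g * S.meet a b = S.meet (g * a) (g * b) :=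
  map_meet ⟨Equiv.mulLeft g, mul_le_mul_left_iff g⟩ a b

theorem meet_mul_delta_zpow (q : ℤ) (a b : G) :
    S.meet a b * S.delta ^ q = S.meet (a * S.delta ^ q) (b * S.delta ^ q) :=
  map_meet ⟨Equiv.mulRight (S.delta ^ q), mul_delta_zpow_le_mul_delta_zpow_iff q⟩ a b

theorem meet_meet_meet_comm (a b c d : G) :
    S.meet (S.meet a b) (S.meet c d) = S.meet (S.meet a c) (S.meet b d) :=
  S.eq_of_forall_le_iff fun x => by simp only [le_meet_iff, and_and_and_comm]

end PrefixOrder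

section Interval

theorem Div_one : S.Div 1 = {1} := by
  ext s
  refine ⟨fun h => S.units_triv s h.1 (by simpa only [le, mul_one] using h.2), ?_⟩
  rintro rfl
  exact ⟨S.pos.one_mem, S.le_refl 1⟩

theorem meet_delta_mem_Div {u : G} (hu : u ∈ S.pos) : S.meet u S.delta ∈ S.Div S.delta :=
  ⟨one_le_iff.1 (le_meet_iff.2 ⟨one_le_iff.2 hu, one_le_iff.2 S.delta_pos⟩),
    S.meet_le_right u S.delta⟩

theorem inv_meet_delta_mul_mem_Div {q : ℕ} {u : G} (hu : u ∈ S.Div (S.delta ^ (q + 1))) :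
    (S.meet u S.delta)⁻¹ * u ∈ S.Div (S.delta ^ q) := by
  have hmeet : S.meet u S.delta * S.delta ^ q =
      S.meet (u * S.delta ^ q) (S.delta ^ (q + 1)) := by
    simpa only [zpow_natCast, pow_succ'] using meet_mul_delta_zpow (q : ℤ) u S.delta
  have hle_mul : S.le u (u * S.delta ^ q) := by
    simpa only [le, inv_mul_cancel_left] using S.pos.pow_mem S.delta_pos q
  have hle : S.le u (S.meet u S.delta * S.delta ^ q) := by
    rw [hmeet]
    exact le_meet_iff.2 ⟨hle_mul, hu.2⟩
  refine ⟨S.meet_le_left u S.delta, ?_⟩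
  rwa [← mul_le_mul_left_iff (S.meet u S.delta), mul_inv_cancel_left]

variable (S) in
theorem finite_Div_delta_pow (q : ℕ) : (S.Div (S.delta ^ q)).Finite := by
  induction q with
  | zero => simp only [pow_zero, Div_one, finite_singleton]
  | succ q ih =>
    have hDiv : (S.Div S.delta).Finite := S.divDelta_finite
    refine (hDiv.mul ih).subset fun u hu => mem_mul.2 ?_
    exact ⟨S.meet u S.delta, meet_delta_mem_Div hu.1, _, inv_meet_delta_mul_mem_Div hu,
      mul_inv_cancel_left _ _⟩

theorem exists_mem_Div_delta_pow {u : G} (hu : u ∈ S.pos) :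
    ∃ q : ℕ, u ∈ S.Div (S.delta ^ q) := by
  obtain ⟨-, q, -, -, hq⟩ := S.delta_bounds u
  have hle : S.le u (S.delta ^ (q.toNat : ℤ)) :=
    le.trans hq (delta_zpow_le_delta_zpow q.self_le_toNat)
  exact ⟨q.toNat, hu, by rwa [zpow_natCast] at hle⟩

variable (S) in
/-- The interval `[a, b]` of the prefix order. -/
def prefixIcc (a b : G) : Set G := {u | S.le a u ∧ S.le u b}

theorem finite_prefixIcc (a b : G) : (S.prefixIcc a b).Finite := by
  by_cases hab : S.le a b
  · obtain ⟨q, hq⟩ := exists_mem_Div_delta_pow hab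
    refine ((S.finite_Div_delta_pow q).preimage (mul_right_injective a⁻¹).injOn).subset ?_
    intro u hu
    exact ⟨hu.1, le.trans ((mul_le_mul_left_iff a⁻¹).2 hu.2) hq.2⟩
  · exact finite_empty.subset fun u hu => hab (hu.1.trans hu.2)

end Interval

section Transport

variable (S) in
theorem meet_DL_NL (y : G) : S.meet (S.DL y) (S.NL y) = 1 := by
  simpa only [mul_one, NL, DL, inv_mul_cancel] using (mul_meet (S := S) (S.DL y) 1 y).symm

theorem transport_delta_zpow (y : G) (q : ℤ) :
    S.transport y (S.delta ^ q) = S.delta ^ q := by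
  rw [transport, ← meet_mul_delta_zpow, meet_DL_NL, one_mul]

theorem transport_meet (y u v : G) :
    S.transport y (S.meet u v) = S.meet (S.transport y u) (S.transport y v) := by
  simp only [transport, mul_meet, meet_meet_meet_comm]

theorem transport_mono (y : G) {u v : G} (h : S.le u v) :
    S.le (S.transport y u) (S.transport y v) :=
  meet_mono ((mul_le_mul_left_iff _).2 h) ((mul_le_mul_left_iff _).2 h)

theorem transport_mem_prefixIcc_delta_zpow (y : G) {u : G} {p q : ℤ}
    (hu : u ∈ S.prefixIcc (S.delta ^ p) (S.delta ^ q)) :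
    S.transport y u ∈ S.prefixIcc (S.delta ^ p) (S.delta ^ q) :=
  ⟨by simpa only [transport_delta_zpow] using transport_mono y hu.1,
    by simpa only [transport_delta_zpow] using transport_mono y hu.2⟩

theorem transport_eq (y u : G) :
    S.transport y u = S.DL y * u * (S.DL (u⁻¹ * y * u))⁻¹ :=
  calc S.transport y u = S.meet (S.DL y * u * 1) (S.DL y * u * (u⁻¹ * y * u)) := by
        simp only [transport, NL, mul_one, mul_assoc, mul_inv_cancel_left]
    _ = S.DL y * u * (S.DL (u⁻¹ * y * u))⁻¹ := by rw [← mul_meet, DL, DL, inv_inv]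

theorem swap_conj (y u : G) :
    S.swap (u⁻¹ * y * u) = (S.transport y u)⁻¹ * S.swap y * S.transport y u := by
  rw [transport_eq, swap, swap]
  group

end Transport

section SwapArrow

/-- The target of an arrow of the conjugacy groupoid of `G`, in which the conjugation
`y ⟶ u⁻¹ y u` is encoded as the pair `(y, u)`. -/
def arrowTarget (p : G × G) : G := p.2⁻¹ * p.1 * p.2

variable (S) in
/-- The action of the swap on arrows `(y, u)` of the conjugacy groupoid: `y ⟶ z` is sent to
`φ(y) ⟶ φ(z)`. The second components along the orbit of `(y, u)` are the iterated transports of `u`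
at the successive swaps of `y`. -/
def swapArrow (p : G × G) : G × G := (S.swap p.1, S.transport p.1 p.2)

theorem semiconj_arrowTarget : Semiconj arrowTarget S.swapArrow S.swap := fun p =>
  (swap_conj p.1 p.2).symm

theorem injOn_swapArrow :
    InjOn S.swapArrow (Prod.fst ⁻¹' periodicPts S.swap ∩ arrowTarget ⁻¹' periodicPts S.swap) := by
  rintro ⟨y, u⟩ ⟨hy, hyu⟩ ⟨z, v⟩ ⟨hz, hzv⟩ heq
  have hswap_injOn : InjOn S.swap (periodicPts S.swap) := (bijOn_periodicPts S.swap).injOn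
  obtain rfl : y = z := hswap_injOn hy hz (congrArg Prod.fst heq)
  have htarget : arrowTarget (y, u) = arrowTarget (y, v) := hswap_injOn hyu hzv <| by
    rw [← semiconj_arrowTarget.eq, heq, semiconj_arrowTarget.eq]
  have htransport : S.transport y u = S.transport y v := congrArg Prod.snd heq
  dsimp only [arrowTarget] at htarget
  rw [transport_eq, transport_eq, htarget, mul_left_inj, mul_right_inj] at htransport
  rw [htransport]

theorem mem_periodicPts_swapArrow {y u : G} (hy : S.Recurrent y)
    (hyu : S.Recurrent (u⁻¹ * y * u)) : (y, u) ∈ periodicPts S.swapArrow := by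
  obtain ⟨p, q, -, hp, hq⟩ := S.delta_bounds u
  let orbit : Set G := range fun n => S.swap^[n] y
  let I := S.prefixIcc (S.delta ^ p) (S.delta ^ q)
  let arrows : Set (G × G) := orbit ×ˢ I ∩ arrowTarget ⁻¹' periodicPts S.swap
  have hperiodic : MapsTo S.swap (periodicPts S.swap) (periodicPts S.swap) :=
    (bijOn_periodicPts S.swap).mapsTo
  have horbit : orbit ⊆ periodicPts S.swap := by
    rintro _ ⟨n, rfl⟩
    exact hperiodic.iterate n hy
  have hfinite : arrows.Finite :=
    ((finite_range_iterate_of_mem_periodicPts hy).prod (finite_prefixIcc _ _)).inter_of_left _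
  have hmaps : MapsTo S.swapArrow arrows arrows := by
    rintro ⟨_, v⟩ ⟨⟨⟨n, rfl⟩, hv⟩, hrec⟩
    refine ⟨⟨⟨n + 1, iterate_succ_apply' _ _ _⟩, transport_mem_prefixIcc_delta_zpow _ hv⟩, ?_⟩
    rw [mem_preimage, semiconj_arrowTarget.eq]
    exact hperiodic hrec
  have hinj : InjOn S.swapArrow arrows :=
    injOn_swapArrow.mono (inter_subset_inter_left _ fun _ ha => horbit ha.1)
  have hmem : (y, u) ∈ arrows := ⟨⟨⟨0, rfl⟩, hp, hq⟩, hyu⟩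
  exact subset_periodicPts_of_injOn hfinite hmaps hinj hmem

theorem iterate_swapArrow_meet (n : ℕ) (y u v : G) :
    S.swapArrow^[n] (y, S.meet u v) = (S.swap^[n] y,
      S.meet (S.swapArrow^[n] (y, u)).2 (S.swapArrow^[n] (y, v)).2) := by
  induction n generalizing y u v with
  | zero => rfl
  | succ n ih => simp only [iterate_succ_apply, swapArrow, transport_meet, ih]

theorem meet_mem_periodicPts_swapArrow {y u v : G} (hu : (y, u) ∈ periodicPts S.swapArrow)
    (hv : (y, v) ∈ periodicPts S.swapArrow) : (y, S.meet u v) ∈ periodicPts S.swapArrow := by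
  obtain ⟨m, hm, hum⟩ := hu
  obtain ⟨n, hn, hvn⟩ := hv
  have hu' : S.swapArrow^[m * n] (y, u) = (y, u) := hum.mul_const n
  have hv' : S.swapArrow^[m * n] (y, v) = (y, v) := hvn.const_mul m
  have hsource : Semiconj Prod.fst S.swapArrow S.swap := fun _ => rfl
  have hy : S.swap^[m * n] y = y := by
    rw [← (hsource.iterate_right (m * n)).eq (y, u), hu']
  refine ⟨m * n, Nat.mul_pos hm hn, ?_⟩
  rw [IsPeriodicPt, IsFixedPt, iterate_swapArrow_meet, hy, hu', hv']

theorem semiconj_swapArrow_delta : Semiconj (fun y => (y, S.delta)) S.swap S.swapArrow := fun y =>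
  Prod.ext rfl (by simpa only [swapArrow, zpow_one] using (transport_delta_zpow y 1).symm)

end SwapArrow

section Recurrent

theorem Recurrent.conj_delta {y : G} (hy : S.Recurrent y) :
    S.Recurrent (S.delta⁻¹ * y * S.delta) :=
  (semiconj_arrowTarget.comp_left semiconj_swapArrow_delta).mapsTo_periodicPts hy

theorem Recurrent.conj_meet {y u v : G} (hy : S.Recurrent y) (hu : S.Recurrent (u⁻¹ * y * u))
    (hv : S.Recurrent (v⁻¹ * y * v)) :
    S.Recurrent ((S.meet u v)⁻¹ * y * S.meet u v) :=
  semiconj_arrowTarget.mapsTo_periodicPts <| meet_mem_periodicPts_swapArrow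
    (mem_periodicPts_swapArrow hy hu) (mem_periodicPts_swapArrow hy hv)

theorem Recurrent.exists_simple_factorization {y u : G} {q : ℕ} (hy : S.Recurrent y)
    (hyu : S.Recurrent (u⁻¹ * y * u)) (hu : u ∈ S.Div (S.delta ^ q)) :
    ∃ l : List G, (∀ s ∈ l, s ∈ S.Div S.delta) ∧ l.prod = u ∧
      ∀ k, S.Recurrent ((l.take k).prod⁻¹ * y * (l.take k).prod) := by
  induction q generalizing y u with
  | zero =>
    rw [pow_zero, Div_one] at hu
    exact ⟨[], by simp, hu.symm, by simpa using hy⟩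
  | succ q ih =>
    set s := S.meet u S.delta
    have hys : S.Recurrent (s⁻¹ * y * s) := hy.conj_meet hyu hy.conj_delta
    have htarget : (s⁻¹ * u)⁻¹ * (s⁻¹ * y * s) * (s⁻¹ * u) = u⁻¹ * y * u := by group
    obtain ⟨l, hl, hprod, hrec⟩ :=
      ih hys (htarget ▸ hyu) (inv_meet_delta_mul_mem_Div hu)
    refine ⟨s :: l, List.forall_mem_cons.2 ⟨meet_delta_mem_Div hu.1, hl⟩, ?_, ?_⟩
    · rw [List.prod_cons, hprod, mul_inv_cancel_left]
    · rintro (_ | k)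
      · simpa using hy
      · simpa [mul_assoc] using hrec k

end Recurrent

section PositiveConjugator

variable (S) in
theorem exists_center_mul_mem_pos (c : G) : ∃ d ∈ Subgroup.center G, d * c ∈ S.pos := by
  obtain ⟨n, hn, hcenter⟩ := S.central_power
  obtain ⟨p, -, -, hp, -⟩ := S.delta_bounds c
  have hle : -((n * p.natAbs : ℕ) : ℤ) ≤ p := by
    have : p.natAbs ≤ n * p.natAbs := Nat.le_mul_of_pos_left _ hn
    omega
  refine ⟨S.delta ^ (n * p.natAbs), pow_mul S.delta n _ ▸ pow_mem hcenter _, ?_⟩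
  simpa only [le, zpow_neg, zpow_natCast, inv_inv] using (delta_zpow_le_delta_zpow hle).trans hp

variable (S) in
theorem exists_pos_conjugator {y z : G} (h : IsConj y z) : ∃ u ∈ S.pos, u⁻¹ * y * u = z := by
  obtain ⟨c, rfl⟩ := isConj_iff.1 h
  obtain ⟨d, hd, hpos⟩ := S.exists_center_mul_mem_pos c⁻¹
  refine ⟨d * c⁻¹, hpos, ?_⟩
  have hdy : d⁻¹ * y * d = y := by
    rw [mul_assoc, Subgroup.mem_center_iff.1 hd y, inv_mul_cancel_left]
  calc (d * c⁻¹)⁻¹ * y * (d * c⁻¹) = c * (d⁻¹ * y * d) * c⁻¹ := by group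
    _ = c * y * c⁻¹ := by rw [hdy]

end PositiveConjugator

end GarsideStructure

/-- any two distinct elements of `R(x)` are connected through `R(x)` by
conjugations by simple elements. -/
theorem garside_connected_by_simple {G : Type*} [Group G]
    (S : GarsideStructure G) (x y z : G)
    (hy : y ∈ S.Rset x) (hz : z ∈ S.Rset x) (hyz : y ≠ z) :
    ∃ (m : ℕ) (u : Fin m → G),
      (∀ i : Fin m, u i ∈ S.Div S.delta) ∧
      (∀ k : ℕ, 1 ≤ k → k ≤ m →
        (((List.ofFn u).take k).prod)⁻¹ * y * ((List.ofFn u).take k).prod ∈ S.Rset x) ∧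
      ((List.ofFn u).prod)⁻¹ * y * (List.ofFn u).prod = z := by
  obtain ⟨u, hu, rfl⟩ := S.exists_pos_conjugator (hy.1.symm.trans hz.1)
  obtain ⟨q, hq⟩ := GarsideStructure.exists_mem_Div_delta_pow hu
  obtain ⟨l, hl, hprod, hrec⟩ := hy.2.exists_simple_factorization hz.2 hq
  refine ⟨l.length, l.get, fun i => hl _ (l.get_mem i), fun k _ _ => ?_, ?_⟩
  · rw [List.ofFn_get]
    have hconj : IsConj y ((l.take k).prod⁻¹ * y * (l.take k).prod) :=
      isConj_iff.2 ⟨(l.take k).prod⁻¹, by rw [inv_inv]⟩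
    exact ⟨hy.1.trans hconj, hrec k⟩
  · rw [List.ofFn_get, hprod]
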